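/- There exists a unique pair (R*, c*) with R* > 0, c* > 0 and c*·θ_hl > q·R* such that both: (a) G(R*, c*) = 0, and (b) there exists a twice continuously differentiable function θ : [R*, +∞) → ℝ with θ'' − c*·θ' + F(θ) = 0 on [R*, +∞), θ(R*) = θ_hl, θ'(R*) = c*·θ_hl − q·R*, θ'(x) > 0 for all x ≥ R*, and θ(x) → θ₊ as x → +∞. Equivalently, the decreasing curve φ defined by {G = 0} and the increasing curve ψ defined by the stable-separatrix condition intersect at exactly one point, and this point lies in the interior of Q₊ = {(R,c) : R > 0, c·θ_hl ≥ q·R}. -/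

import Mathlib

open Set Filter

/-- The transcendental function `G(R,c) = q(e^{cR} − 1 − cR) − c²(θ_ig e^{cR} − θ_hl)`. -/
noncomputable def G (q θig θhl R c : ℝ) : ℝ :=
  q * (Real.exp (c * R) - 1 - c * R) - c ^ 2 * (θig * Real.exp (c * R) - θhl)

/-!
In the variables `t = c (x - R)`, `s = cR` and `l = c⁻²` the problem reads `Θ'' = Θ' - l F(Θ)` on
`[0, ∞)` with `Θ(0) = θ_hl`, `Θ'(0) = θ_hl - q s l` and `Θ → θ₊`, and the equation `G = 0` gives `l`
as an explicit function of `s`, so that only the parameter `s` is left.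

For the existence one shoots along `s ∈ [log (θ_hl / θ_ig), θ_hl / θ_ig]`. An orbit can fail to
connect `θ_hl` to `θ₊` by turning back or by overshooting `θ₊`; both failures are open conditions on
`s` and they exclude each other. The second occurs at the left end point, where `l = 0`, and the
first at the right one, where `Θ'(0) < 0`, so by connectedness some `s` in between has neither.

For the uniqueness, `l` increases with `s` inside `Q₊`, so the prescribed velocity
`θ_hl - q s l` strictly decreases, whereas by comparison the initial velocity of a connecting orbit
is a nondecreasing function of `l`.
-/

open scoped NNReal Topology

section IntegralCurves

variable {E : Type*} [NormedAddCommGroup E] [NormedSpace ℝ E] {K : ℝ≥0}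

lemma isIntegralCurveOn_Icc_trans {v : ℝ → E → E} {γ : ℝ → E} {a b c : ℝ} (hab : a ≤ b)
    (hbc : b ≤ c) (h₁ : IsIntegralCurveOn γ v (Icc a b)) (h₂ : IsIntegralCurveOn γ v (Icc b c)) :
    IsIntegralCurveOn γ v (Icc a c) := by
  intro t ht
  rcases lt_trichotomy t b with htb | rfl | hbt
  · exact (h₁ t ⟨ht.1, htb.le⟩).mono_of_mem_nhdsWithin
      (mem_nhdsWithin.2 ⟨Iio b, isOpen_Iio, htb, fun s hs ↦ ⟨hs.2.1, le_of_lt hs.1⟩⟩)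
  · rw [← Icc_union_Icc_eq_Icc hab hbc]
    exact (h₁ t ⟨hab, le_rfl⟩).union (h₂ t ⟨le_rfl, hbc⟩)
  · exact (h₂ t ⟨hbt.le, ht.2⟩).mono_of_mem_nhdsWithin
      (mem_nhdsWithin.2 ⟨Ioi b, isOpen_Ioi, hbt, fun s hs ↦ ⟨le_of_lt hs.1, hs.2.2⟩⟩)

lemma isIntegralCurveOn_Ici_of_forall_Icc {v : ℝ → E → E} {γ : ℝ → E} {ε : ℝ} (hε : 0 < ε)
    (h : ∀ n : ℕ, IsIntegralCurveOn γ v (Icc (n * ε) ((n + 1) * ε))) :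
    IsIntegralCurveOn γ v (Ici 0) := by
  have hIcc : ∀ n : ℕ, IsIntegralCurveOn γ v (Icc 0 ((n + 1) * ε)) := by
    intro n
    induction n with
    | zero => simpa using h 0
    | succ n ih =>
      have hn := h (n + 1)
      push_cast at hn ⊢
      exact isIntegralCurveOn_Icc_trans (by positivity) (by linarith) ih hn
  intro t ht
  have htn : t < (⌊t / ε⌋₊ + 1) * ε := (div_lt_iff₀ hε).1 (Nat.lt_floor_add_one _)
  exact (hIcc _ t ⟨ht, htn.le⟩).mono_of_mem_nhdsWithin
    (mem_nhdsWithin.2 ⟨Iio _, isOpen_Iio, htn, fun s hs ↦ ⟨hs.2, le_of_lt hs.1⟩⟩)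

theorem exists_isIntegralCurveOn_Ici_of_uniform {X : E → E} {ε : ℝ} (hε : 0 < ε)
    (h : ∀ z, ∃ γ : ℝ → E, γ 0 = z ∧ IsIntegralCurveOn γ (fun _ ↦ X) (Icc 0 ε)) (z₀ : E) :
    ∃ γ : ℝ → E, γ 0 = z₀ ∧ IsIntegralCurveOn γ (fun _ ↦ X) (Ici 0) := by
  choose Φ hΦ0 hΦ using h
  let z : ℕ → E := fun n ↦ (fun w ↦ Φ w ε)^[n] z₀
  have hz : ∀ n, z (n + 1) = Φ (z n) ε := fun n ↦ Function.iterate_succ_apply' _ n z₀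
  let γ : ℝ → E := fun t ↦ Φ (z ⌊t / ε⌋₊) (t - ⌊t / ε⌋₊ * ε)
  have hγ : ∀ n : ℕ, ∀ t ∈ Icc (n * ε) ((n + 1) * ε), γ t = Φ (z n) (t - n * ε) := by
    intro n t ht
    rcases ht.2.lt_or_eq with h | rfl
    · have hn : ⌊t / ε⌋₊ = n := by
        rw [Nat.floor_eq_iff (div_nonneg (le_trans (by positivity) ht.1) hε.le)]
        exact ⟨(le_div_iff₀ hε).2 ht.1, (div_lt_iff₀ hε).2 h⟩
      simp only [γ, hn]
    · have hn : ⌊(n + 1) * ε / ε⌋₊ = n + 1 := by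
        rw [mul_div_cancel_right₀ _ hε.ne']
        exact_mod_cast Nat.floor_natCast (n + 1)
      have hε' : ((n : ℝ) + 1) * ε - n * ε = ε := by ring
      simp only [γ, hn, hz, Nat.cast_add_one, sub_self, hΦ0, hε']
  refine ⟨γ, by simp [γ, hΦ0, z], isIntegralCurveOn_Ici_of_forall_Icc hε fun n t ht ↦ ?_⟩
  have hmaps : MapsTo (fun t : ℝ ↦ t - n * ε) (Icc (n * ε) ((n + 1) * ε)) (Icc 0 ε) :=
    fun s hs ↦ ⟨by linarith [hs.1], by linarith [hs.2]⟩
  have hshift := (hΦ (z n) (t - n * ε) (hmaps ht)).scomp t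
    ((hasDerivWithinAt_id t _).sub_const (n * ε)) hmaps
  rw [one_smul, ← hγ n t ht] at hshift
  exact hshift.congr_of_mem (hγ n) ht

/- On the ball of radius `‖X z‖ + 1` around `z` the field has norm at most
`‖X z‖ + K (‖X z‖ + 1) ≤ (1 + K) (‖X z‖ + 1)`, so a curve needs time `1 / (1 + K)` to leave it,
whatever `z` is. -/
lemma exists_isIntegralCurveOn_Icc_of_lipschitzWith [CompleteSpace E] {X : E → E}
    (hX : LipschitzWith K X) (z : E) :
    ∃ γ : ℝ → E, γ 0 = z ∧ IsIntegralCurveOn γ (fun _ ↦ X) (Icc 0 (1 / (1 + K))) := by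
  have hε : 0 < 1 / (1 + (K : ℝ)) := by positivity
  have hPL : IsPicardLindelof (fun _ ↦ X) (⟨0, le_rfl, hε.le⟩ : Icc (0 : ℝ) (1 / (1 + K))) z
      (‖X z‖₊ + 1) 0 (‖X z‖₊ + K * (‖X z‖₊ + 1)) K := by
    refine IsPicardLindelof.of_time_independent (fun x hx ↦ ?_) hX.lipschitzOnWith ?_
    · have hdist : ‖x - z‖ ≤ ‖X z‖ + 1 := by simpa [dist_eq_norm] using hx
      push_cast
      calc ‖X x‖ ≤ ‖X z‖ + ‖X x - X z‖ := norm_le_norm_add_norm_sub' _ _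
        _ ≤ ‖X z‖ + K * ‖x - z‖ := by gcongr; exact hX.norm_sub_le x z
        _ ≤ ‖X z‖ + K * (‖X z‖ + 1) := by gcongr
    · simp only [sub_zero, sub_self, max_eq_left hε.le]
      push_cast
      rw [mul_one_div, div_le_iff₀ (by positivity)]
      linarith [K.coe_nonneg]
  simpa [IsIntegralCurveOn] using hPL.exists_eq_forall_mem_Icc_hasDerivWithinAt₀

theorem exists_isIntegralCurveOn_Ici_of_lipschitzWith [CompleteSpace E] {X : E → E}
    (hX : LipschitzWith K X) (z : E) :
    ∃ γ : ℝ → E, γ 0 = z ∧ IsIntegralCurveOn γ (fun _ ↦ X) (Ici 0) :=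
  exists_isIntegralCurveOn_Ici_of_uniform (by positivity)
    (exists_isIntegralCurveOn_Icc_of_lipschitzWith hX) z

lemma isIntegralCurveOn_eqOn_const_of_eq_zero {X : E → E} (hX : LipschitzWith K X) {γ : ℝ → E}
    {a b : ℝ} (hγ : IsIntegralCurveOn γ (fun _ ↦ X) (Icc a b)) (hb : X (γ b) = 0) :
    EqOn γ (fun _ ↦ γ b) (Icc a b) :=
  ODE_solution_unique_of_mem_Icc_left (v := fun _ ↦ X) (s := fun _ ↦ univ)
    (fun _ _ ↦ hX.lipschitzOnWith) hγ.continuousOn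
    (fun t ht ↦ (hγ t (Ioc_subset_Icc_self ht)).mono_of_mem_nhdsWithin
      (mem_nhdsWithin.2 ⟨Ioi a, isOpen_Ioi, ht.1, fun _ hs ↦ ⟨le_of_lt hs.1, hs.2.trans ht.2⟩⟩))
    (fun _ _ ↦ mem_univ _) continuousOn_const
    (fun t _ ↦ by simpa only [hb] using hasDerivWithinAt_const t (Iic t) (γ b))
    (fun _ _ ↦ mem_univ _) rfl

lemma dist_le_gronwallBound_of_isIntegralCurveOn_Ici {X Y : E → E} (hX : LipschitzWith K X)
    {δ ε : ℝ} (hXY : ∀ z, dist (Y z) (X z) ≤ ε) {γ η : ℝ → E}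
    (hγ : IsIntegralCurveOn γ (fun _ ↦ X) (Ici 0)) (hη : IsIntegralCurveOn η (fun _ ↦ Y) (Ici 0))
    (h₀ : dist (η 0) (γ 0) ≤ δ) {t : ℝ} (ht : 0 ≤ t) :
    dist (η t) (γ t) ≤ gronwallBound δ K ε t := by
  have hright {ζ : ℝ → E} {Z : E → E} (hζ : IsIntegralCurveOn ζ (fun _ ↦ Z) (Ici 0)) :
      ∀ s ∈ Ico 0 t, HasDerivWithinAt ζ (Z (ζ s)) (Ici s) s := fun s hs ↦
    (hζ s hs.1).mono (Ici_subset_Ici.2 hs.1)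
  simpa using dist_le_of_approx_trajectories_ODE (v := fun _ ↦ X) (fun _ ↦ hX)
    (hη.continuousOn.mono Icc_subset_Ici_self) (hright hη) (fun s _ ↦ hXY (η s))
    (hγ.continuousOn.mono Icc_subset_Ici_self) (hright hγ) (fun _ _ ↦ (dist_self _).le)
    h₀ t ⟨ht, le_rfl⟩

theorem continuousAt_isIntegralCurveOn_Ici {P : Type*} [TopologicalSpace P] {X : P → E → E}
    {p₀ : P} (hX : LipschitzWith K (X p₀)) (hXp₀ : TendstoUniformly X (X p₀) (𝓝 p₀))
    {γ : P → ℝ → E} (hγ : ∀ p, IsIntegralCurveOn (γ p) (fun _ ↦ X p) (Ici 0))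
    (h₀ : ContinuousAt (fun p ↦ γ p 0) p₀) {t : ℝ} (ht : 0 ≤ t) :
    ContinuousAt (fun p ↦ γ p t) p₀ := by
  have hcont : Continuous fun ε ↦ gronwallBound ε K ε t := by
    by_cases hK : (K : ℝ) = 0
    · simp only [hK, gronwallBound_K0]
      fun_prop
    · simp only [gronwallBound_of_K_ne_0 hK]
      fun_prop
  have hzero : Tendsto (fun ε ↦ gronwallBound ε K ε t) (𝓝[>] 0) (𝓝 0) := by
    simpa only [gronwallBound_ε0_δ0] using (hcont.tendsto 0).mono_left nhdsWithin_le_nhds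
  refine Metric.tendsto_nhds.2 fun ρ hρ ↦ ?_
  obtain ⟨ε, hερ, hε⟩ : ∃ ε, gronwallBound ε K ε t < ρ ∧ 0 < ε :=
    ((hzero.eventually (gt_mem_nhds hρ)).and self_mem_nhdsWithin).exists
  filter_upwards [Metric.tendstoUniformly_iff.1 hXp₀ ε hε, Metric.tendsto_nhds.1 h₀ ε hε]
    with p hp hp₀
  exact (dist_le_gronwallBound_of_isIntegralCurveOn_Ici hX
    (fun z ↦ by rw [dist_comm]; exact (hp z).le) (hγ p₀) (hγ p) hp₀.le ht).trans_lt hερ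

end IntegralCurves

section LinearGrowth

lemma monotoneOn_of_forall_hasDerivWithinAt_nonneg {D : Set ℝ} (hD : Convex ℝ D) {u u' : ℝ → ℝ}
    (hu : ∀ t ∈ D, HasDerivWithinAt u (u' t) D t) (hu' : ∀ t ∈ interior D, 0 ≤ u' t) :
    MonotoneOn u D :=
  monotoneOn_of_hasDerivWithinAt_nonneg hD (fun t ht ↦ (hu t ht).continuousWithinAt)
    (fun t ht ↦ (hu t (interior_subset ht)).mono interior_subset) hu'

lemma monotoneOn_mul_exp_neg {D : Set ℝ} (hD : Convex ℝ D) {u g : ℝ → ℝ}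
    (hu : ∀ t ∈ D, HasDerivWithinAt u (u t + g t) D t) (hg : ∀ t ∈ interior D, 0 ≤ g t) :
    MonotoneOn (fun t ↦ u t * Real.exp (-t)) D :=
  monotoneOn_of_forall_hasDerivWithinAt_nonneg (u' := fun t ↦ g t * Real.exp (-t)) hD
    (fun t ht ↦ ((hu t ht).mul (hasDerivAt_neg t).exp.hasDerivWithinAt).congr_deriv (by ring))
    fun t ht ↦ mul_nonneg (hg t ht) (Real.exp_pos _).le

lemma forall_pos_of_forall_Ico_pos {u : ℝ → ℝ} {a : ℝ} (hu : ContinuousOn u (Ici a))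
    (h : ∀ T ∈ Ici a, (∀ s ∈ Ico a T, 0 < u s) → 0 < u T) : ∀ t ∈ Ici a, 0 < u t := by
  intro T hT
  by_contra! hneg
  have hcomp : IsCompact {t ∈ Icc a T | u t ≤ 0} :=
    isCompact_Icc.of_isClosed_subset
      ((hu.mono Icc_subset_Ici_self).preimage_isClosed_of_isClosed isClosed_Icc isClosed_Iic)
      (fun _ ht ↦ ht.1)
  obtain ⟨τ, ⟨hτ, huτ⟩, hmin⟩ := hcomp.exists_isLeast ⟨T, ⟨hT, le_rfl⟩, hneg⟩
  refine (h τ hτ.1 fun s hs ↦ ?_).not_ge huτ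
  by_contra! hs'
  exact hs.2.not_ge (hmin ⟨⟨hs.1, hs.2.le.trans hτ.2⟩, hs'⟩)

lemma pos_of_hasDerivWithinAt_add {u g : ℝ → ℝ} {a : ℝ}
    (hu : ∀ t ∈ Ici a, HasDerivWithinAt u (u t + g t) (Ici a) t) (ha : 0 < u a)
    (hg : ∀ t ∈ Ici a, (∀ s ∈ Icc a t, 0 < u s) → 0 ≤ g t) : ∀ t ∈ Ici a, 0 < u t := by
  refine forall_pos_of_forall_Ico_pos (fun t ht ↦ (hu t ht).continuousWithinAt) fun T hT hpos ↦ ?_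
  have hmono : MonotoneOn (fun t ↦ u t * Real.exp (-t)) (Icc a T) := by
    refine monotoneOn_mul_exp_neg (convex_Icc a T)
      (fun t ht ↦ (hu t ht.1).mono Icc_subset_Ici_self) fun t ht ↦ ?_
    rw [interior_Icc] at ht
    exact hg t ht.1.le fun s hs ↦ hpos s ⟨hs.1, hs.2.trans_lt ht.2⟩
  have hle : u a * Real.exp (-a) ≤ u T * Real.exp (-T) := hmono ⟨le_rfl, hT⟩ ⟨hT, le_rfl⟩ hT
  exact pos_of_mul_pos_left ((mul_pos ha (Real.exp_pos _)).trans_le hle) (Real.exp_pos _).le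

end LinearGrowth

section Orbits

/-- The vector field of the first-order system of `Θ'' = Θ' - l f(Θ)`, in the coordinates
`(Θ, Θ')`. -/
def planarField (f : ℝ → ℝ) (l : ℝ) (z : ℝ × ℝ) : ℝ × ℝ := (z.2, z.2 - l * f z.1)

/-- A forward orbit `γ = (Θ, Θ')` of `Θ'' = Θ' - l f(Θ)`. It is only constrained on `[0, ∞)`, with
one-sided derivatives at `0`. -/
def IsOrbit (f : ℝ → ℝ) (l : ℝ) (γ : ℝ → ℝ × ℝ) : Prop :=
  IsIntegralCurveOn γ (fun _ ↦ planarField f l) (Ici 0)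

variable {f : ℝ → ℝ} {K : ℝ≥0} {l b : ℝ} {γ : ℝ → ℝ × ℝ}

lemma lipschitzWith_planarField (hf : LipschitzWith K f) (l : ℝ) :
    LipschitzWith (max 1 (1 + ‖l‖₊ * K)) (planarField f l) := by
  have hreaction : LipschitzWith (‖l‖₊ * K) fun z : ℝ × ℝ ↦ l * f z.1 := by
    simpa [Function.comp_def] using (lipschitzWith_smul l).comp (hf.comp LipschitzWith.prod_fst)
  exact LipschitzWith.prod_snd.prodMk (LipschitzWith.prod_snd.sub hreaction)

lemma tendstoUniformly_planarField {M : ℝ} (hM : ∀ u, |f u| ≤ M) (l : ℝ) :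
    TendstoUniformly (planarField f) (planarField f l) (𝓝 l) := by
  have hM0 : 0 ≤ M := (abs_nonneg _).trans (hM 0)
  refine Metric.tendstoUniformly_iff.2 fun ε hε ↦ ?_
  filter_upwards [Metric.ball_mem_nhds l (div_pos hε (by positivity : 0 < M + 1))] with l' hl' z
  rw [Metric.mem_ball', lt_div_iff₀ (by positivity)] at hl'
  have hdist : dist (planarField f l z) (planarField f l' z) = dist l l' * |f z.1| := by
    simp only [planarField, Prod.dist_eq, dist_self, dist_sub_left, Real.dist_eq, ← sub_mul,
      abs_mul]
    exact max_eq_right (by positivity)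
  calc dist (planarField f l z) (planarField f l' z) ≤ dist l l' * (M + 1) := by
        rw [hdist]
        gcongr
        linarith [hM z.1]
    _ < ε := hl'

lemma IsOrbit.hasDerivWithinAt_fst (h : IsOrbit f l γ) {t : ℝ} (ht : 0 ≤ t) :
    HasDerivWithinAt (fun t ↦ (γ t).1) (γ t).2 (Ici 0) t :=
  (ContinuousLinearMap.fst ℝ ℝ ℝ).hasFDerivAt.comp_hasDerivWithinAt t (h t ht)

lemma IsOrbit.hasDerivWithinAt_snd (h : IsOrbit f l γ) {t : ℝ} (ht : 0 ≤ t) :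
    HasDerivWithinAt (fun t ↦ (γ t).2) ((γ t).2 - l * f (γ t).1) (Ici 0) t :=
  (ContinuousLinearMap.snd ℝ ℝ ℝ).hasFDerivAt.comp_hasDerivWithinAt t (h t ht)

lemma IsOrbit.monotoneOn_fst (h : IsOrbit f l γ) {D : Set ℝ} (hD : Convex ℝ D) (hD0 : D ⊆ Ici 0)
    (hsnd : ∀ t ∈ D, 0 ≤ (γ t).2) : MonotoneOn (fun t ↦ (γ t).1) D :=
  monotoneOn_of_forall_hasDerivWithinAt_nonneg hD
    (fun _ ht ↦ (h.hasDerivWithinAt_fst (hD0 ht)).mono hD0) fun t ht ↦ hsnd t (interior_subset ht)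

lemma IsOrbit.snd_nonpos_of_le (h : IsOrbit f l γ) (hl : 0 ≤ l) (hf : ∀ u, 0 ≤ f u) {s t : ℝ}
    (hs : 0 ≤ s) (hst : s ≤ t) (hsnd : (γ s).2 ≤ 0) : (γ t).2 ≤ 0 := by
  have hmono : MonotoneOn (fun t ↦ -(γ t).2 * Real.exp (-t)) (Ici 0) :=
    monotoneOn_mul_exp_neg (g := fun t ↦ l * f (γ t).1) (convex_Ici 0)
      (fun t ht ↦ (h.hasDerivWithinAt_snd ht).neg.congr_deriv (by ring))
      fun t _ ↦ mul_nonneg hl (hf _)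
  have hle : -(γ s).2 * Real.exp (-s) ≤ -(γ t).2 * Real.exp (-t) := hmono hs (hs.trans hst) hst
  exact neg_nonneg.1 (nonneg_of_mul_nonneg_left
    ((mul_nonneg (neg_nonneg.2 hsnd) (Real.exp_pos _).le).trans hle) (Real.exp_pos _))

lemma IsOrbit.snd_pos_of_le_fst (h : IsOrbit f l γ) (hl : 0 ≤ l) (hf : ∀ u, 0 ≤ f u)
    (hfb : ∀ u, b ≤ u → f u = 0) {t₀ : ℝ} (ht₀ : 0 ≤ t₀) (hfst : b ≤ (γ t₀).1)
    (hsnd : 0 < (γ t₀).2) : ∀ t ∈ Ici (0 : ℝ), 0 < (γ t).2 := by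
  intro t ht
  rcases le_total t t₀ with htt | htt
  · by_contra! hc
    exact hsnd.not_ge (h.snd_nonpos_of_le hl hf ht htt hc)
  · have hsub : Ici t₀ ⊆ Ici (0 : ℝ) := Ici_subset_Ici.2 ht₀
    refine pos_of_hasDerivWithinAt_add (u := fun t ↦ (γ t).2) (g := fun t ↦ -(l * f (γ t).1))
      (fun t ht ↦ (h.hasDerivWithinAt_snd (hsub ht)).mono hsub) hsnd (fun t ht hpos ↦ ?_) t htt
    have hmono := h.monotoneOn_fst (convex_Icc t₀ t) (Icc_subset_Ici_self.trans hsub)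
      fun s hs ↦ (hpos s hs).le
    have hbt : b ≤ (γ t).1 := hfst.trans (hmono ⟨le_rfl, ht⟩ ⟨ht, le_rfl⟩ ht)
    simp [hfb _ hbt]

lemma IsOrbit.snd_pos_of_snd_nonneg (h : IsOrbit f l γ) (hf : LipschitzWith K f) (hl : 0 < l)
    (hf0 : ∀ u, 0 ≤ f u) (hfγ : 0 < f (γ 0).1) (hsnd : ∀ t ∈ Ici (0 : ℝ), 0 ≤ (γ t).2) :
    ∀ t ∈ Ici (0 : ℝ), 0 < (γ t).2 := by
  intro t ht
  refine (hsnd t ht).lt_of_ne' fun hrest ↦ ?_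
  have hrest' : ∀ s ∈ Ici t, (γ s).2 = 0 := fun s hs ↦
    le_antisymm (h.snd_nonpos_of_le hl.le hf0 ht hs hrest.le) (hsnd s (Ici_subset_Ici.2 ht hs))
  have hacc : (γ t).2 - l * f (γ t).1 = 0 :=
    (uniqueDiffWithinAt_Ici t).eq_deriv _
      ((h.hasDerivWithinAt_snd ht).mono (Ici_subset_Ici.2 ht))
      ((hasDerivWithinAt_const t (Ici t) (0 : ℝ)).congr_of_mem hrest' self_mem_Ici)
  have hequilibrium : planarField f l (γ t) = 0 := Prod.ext hrest hacc
  have hconst : γ 0 = γ t := isIntegralCurveOn_eqOn_const_of_eq_zero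
    (lipschitzWith_planarField hf l) (h.mono Icc_subset_Ici_self) hequilibrium ⟨le_rfl, ht⟩
  rw [hrest, zero_sub, neg_eq_zero, ← hconst] at hacc
  exact (mul_pos hl hfγ).ne' hacc

lemma IsOrbit.tendsto_fst (h : IsOrbit f l γ) (hl : 0 < l)
    (hfc : ContinuousOn f (Ico (γ 0).1 b)) (hfpos : ∀ u ∈ Ico (γ 0).1 b, 0 < f u)
    (hsnd : ∀ t ∈ Ici (0 : ℝ), 0 ≤ (γ t).2) (hle : ∀ t ∈ Ici (0 : ℝ), (γ t).1 ≤ b) :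
    Tendsto (fun t ↦ (γ t).1) atTop (𝓝 b) := by
  have hmono : MonotoneOn (fun t ↦ (γ t).1) (Ici 0) :=
    h.monotoneOn_fst (convex_Ici 0) subset_rfl hsnd
  refine tendsto_order.2 ⟨fun c hc ↦ ?_, fun c hc ↦ ?_⟩
  swap
  · filter_upwards [eventually_ge_atTop 0] with t ht
    exact (hle t ht).trans_lt hc
  by_contra hcon
  have hmem : ∀ t ∈ Ici (0 : ℝ), (γ t).1 ∈ Icc (γ 0).1 c := by
    refine fun t ht ↦ ⟨hmono self_mem_Ici ht ht, ?_⟩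
    by_contra! hlt
    refine hcon ?_
    filter_upwards [eventually_ge_atTop t] with s hs
    exact hlt.trans_le (hmono ht (le_trans ht hs) hs)
  have hsub : Icc (γ 0).1 c ⊆ Ico (γ 0).1 b := Icc_subset_Ico_right hc
  obtain ⟨δ, hδ, hδf⟩ := isCompact_Icc.exists_forall_le' (hfc.mono hsub)
    fun u hu ↦ hfpos u (hsub hu)
  have hdecay : MonotoneOn (fun t ↦ (γ t).1 - (γ t).2 - l * δ * t) (Ici 0) := by
    refine monotoneOn_of_forall_hasDerivWithinAt_nonneg (convex_Ici 0)
      (fun t ht ↦ ((h.hasDerivWithinAt_fst ht).sub (h.hasDerivWithinAt_snd ht)).sub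
        ((hasDerivWithinAt_id t _).const_mul (l * δ))) fun t ht ↦ ?_
    have := mul_le_mul_of_nonneg_left (hδf _ (hmem t (interior_subset ht))) hl.le
    linarith
  have hunbounded : Tendsto (fun t ↦ l * δ * t) atTop atTop :=
    tendsto_id.const_mul_atTop (mul_pos hl hδ)
  obtain ⟨t, ht, htb⟩ := ((eventually_ge_atTop 0).and
    (hunbounded.eventually_gt_atTop (b - ((γ 0).1 - (γ 0).2)))).exists
  have h0t := hdecay self_mem_Ici ht ht
  dsimp only at h0t
  linarith [hle t ht, hsnd t ht]

lemma IsOrbit.exists_lt_fst_of_zero (h : IsOrbit f 0 γ) (hsnd : 0 < (γ 0).2) (b : ℝ) :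
    ∃ t ∈ Ici (0 : ℝ), b < (γ t).1 ∧ 0 < (γ t).2 := by
  have hsnd' : ∀ t ∈ Ici (0 : ℝ), HasDerivWithinAt (fun t ↦ (γ t).2) ((γ t).2 + 0) (Ici 0) t :=
    fun t ht ↦ (h.hasDerivWithinAt_snd ht).congr_deriv (by ring)
  have hpos : ∀ t ∈ Ici (0 : ℝ), 0 < (γ t).2 :=
    pos_of_hasDerivWithinAt_add hsnd' hsnd fun _ _ _ ↦ le_rfl
  have hmono : MonotoneOn (fun t ↦ (γ t).2) (Ici 0) :=
    monotoneOn_of_forall_hasDerivWithinAt_nonneg (convex_Ici 0) hsnd' fun t ht ↦ by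
      simpa using (hpos t (interior_subset ht)).le
  have hlinear : MonotoneOn (fun t ↦ (γ t).1 - (γ 0).2 * t) (Ici 0) :=
    monotoneOn_of_forall_hasDerivWithinAt_nonneg (convex_Ici 0)
      (fun t ht ↦ (h.hasDerivWithinAt_fst ht).sub ((hasDerivWithinAt_id t _).const_mul (γ 0).2))
      fun t ht ↦ by simpa using hmono self_mem_Ici (interior_subset ht) (interior_subset ht)
  obtain ⟨t, ht, htb⟩ := ((eventually_ge_atTop 0).and
    ((tendsto_id.const_mul_atTop hsnd).eventually_gt_atTop (b - (γ 0).1))).exists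
  have h0t := hlinear self_mem_Ici ht ht
  simp only [id, mul_zero, sub_zero] at h0t htb
  exact ⟨t, ht, by linarith, hpos t ht⟩

end Orbits

section ConnectingOrbits

/-- A forward orbit `γ = (Θ, Θ')` of `Θ'' = Θ' - l F(Θ)` along which `Θ` increases from `a` to the
limit `b`. -/
structure IsConnectingOrbit (F : ℝ → ℝ) (l a b : ℝ) (γ : ℝ → ℝ × ℝ) : Prop where
  isOrbit : IsOrbit F l γ
  fst_zero : (γ 0).1 = a
  snd_pos : ∀ t ∈ Ici (0 : ℝ), 0 < (γ t).2
  tendsto_fst : Tendsto (fun t ↦ (γ t).1) atTop (𝓝 b)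

namespace IsConnectingOrbit

variable {F : ℝ → ℝ} {l a b : ℝ} {γ : ℝ → ℝ × ℝ}

lemma fst_mem_Icc (h : IsConnectingOrbit F l a b γ) {t : ℝ} (ht : 0 ≤ t) : (γ t).1 ∈ Icc a b := by
  have hmono : MonotoneOn (fun t ↦ (γ t).1) (Ici 0) :=
    h.isOrbit.monotoneOn_fst (convex_Ici 0) subset_rfl fun t ht ↦ (h.snd_pos t ht).le
  refine ⟨h.fst_zero ▸ hmono self_mem_Ici ht ht, ge_of_tendsto h.tendsto_fst ?_⟩
  filter_upwards [eventually_ge_atTop t] with s hs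
  exact hmono ht (ht.trans hs) hs

lemma congr {f : ℝ → ℝ} (h : IsConnectingOrbit f l a b γ) (hfF : EqOn f F (Icc a b)) :
    IsConnectingOrbit F l a b γ where
  isOrbit t ht := (h.isOrbit t ht).congr_deriv <| by
    simp only [planarField, hfF (h.fst_mem_Icc ht)]
  fst_zero := h.fst_zero
  snd_pos := h.snd_pos
  tendsto_fst := h.tendsto_fst

/- If `Θ₁' - Θ₂'` is positive at time `0`, then `Θ₁ > Θ₂` as long as it stays positive, so that
`l₁ F(Θ₁) ≤ l₂ F(Θ₂)` and `Θ₁' - Θ₂'` keeps growing; hence `Θ₁ - Θ₂` cannot tend to `b - b = 0`. -/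
theorem snd_zero_le_snd_zero {l₁ l₂ : ℝ} {γ₁ γ₂ : ℝ → ℝ × ℝ} (hF : AntitoneOn F (Icc a b))
    (hFb : 0 ≤ F b) (hl₁ : 0 ≤ l₁) (hl : l₁ ≤ l₂) (h₁ : IsConnectingOrbit F l₁ a b γ₁)
    (h₂ : IsConnectingOrbit F l₂ a b γ₂) : (γ₁ 0).2 ≤ (γ₂ 0).2 := by
  by_contra! h0
  have hfst : ∀ t ∈ Ici (0 : ℝ), HasDerivWithinAt (fun t ↦ (γ₁ t).1 - (γ₂ t).1)
      ((γ₁ t).2 - (γ₂ t).2) (Ici 0) t := fun t ht ↦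
    (h₁.isOrbit.hasDerivWithinAt_fst ht).sub (h₂.isOrbit.hasDerivWithinAt_fst ht)
  have hsnd : ∀ t ∈ Ici (0 : ℝ), HasDerivWithinAt (fun t ↦ (γ₁ t).2 - (γ₂ t).2)
      ((γ₁ t).2 - (γ₂ t).2 + (l₂ * F (γ₂ t).1 - l₁ * F (γ₁ t).1)) (Ici 0) t := fun t ht ↦
    ((h₁.isOrbit.hasDerivWithinAt_snd ht).sub
      (h₂.isOrbit.hasDerivWithinAt_snd ht)).congr_deriv (by ring)
  have hpos : ∀ t ∈ Ici (0 : ℝ), 0 < (γ₁ t).2 - (γ₂ t).2 := by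
    refine pos_of_hasDerivWithinAt_add hsnd (sub_pos.2 h0) fun t ht hgap ↦ ?_
    have hmono : MonotoneOn (fun t ↦ (γ₁ t).1 - (γ₂ t).1) (Icc 0 t) :=
      monotoneOn_of_forall_hasDerivWithinAt_nonneg (convex_Icc 0 t)
        (fun s hs ↦ (hfst s hs.1).mono Icc_subset_Ici_self)
        fun s hs ↦ (hgap s (interior_subset hs)).le
    have hΘ : (γ₂ t).1 ≤ (γ₁ t).1 := by
      simpa [h₁.fst_zero, h₂.fst_zero] using hmono ⟨le_rfl, ht⟩ ⟨ht, le_rfl⟩ ht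
    have hm₁ := h₁.fst_mem_Icc ht
    have hF₁ : 0 ≤ F (γ₁ t).1 := hFb.trans (hF hm₁ ⟨hm₁.1.trans hm₁.2, le_rfl⟩ hm₁.2)
    have hF₂ : F (γ₁ t).1 ≤ F (γ₂ t).1 := hF (h₂.fst_mem_Icc ht) hm₁ hΘ
    exact sub_nonneg.2 (mul_le_mul hl hF₂ hF₁ (hl₁.trans hl))
  have hstrict : StrictMonoOn (fun t ↦ (γ₁ t).1 - (γ₂ t).1) (Ici 0) :=
    strictMonoOn_of_hasDerivWithinAt_pos (convex_Ici 0)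
      (fun t ht ↦ (hfst t ht).continuousWithinAt)
      (fun t ht ↦ (hfst t (interior_subset ht)).mono interior_subset)
      fun t ht ↦ hpos t (interior_subset ht)
  have hone : 0 < (γ₁ 1).1 - (γ₂ 1).1 := by
    simpa [h₁.fst_zero, h₂.fst_zero] using hstrict self_mem_Ici (zero_le_one' ℝ) one_pos
  have hlim : Tendsto (fun t ↦ (γ₁ t).1 - (γ₂ t).1) atTop (𝓝 0) := by
    simpa using h₁.tendsto_fst.sub h₂.tendsto_fst
  refine hone.not_ge (ge_of_tendsto hlim ?_)
  filter_upwards [eventually_ge_atTop 1] with t ht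
  exact hstrict.monotoneOn (zero_le_one' ℝ) (zero_le_one.trans ht) ht

end IsConnectingOrbit

variable {f : ℝ → ℝ} {K : ℝ≥0} {l a b : ℝ}

lemma IsOrbit.isConnectingOrbit {γ : ℝ → ℝ × ℝ} (h : IsOrbit f l γ) (hf : LipschitzWith K f)
    (hl : 0 < l) (hf0 : ∀ u, 0 ≤ f u) (hfpos : ∀ u ∈ Ico a b, 0 < f u) (hab : a < b)
    (hfst : (γ 0).1 = a) (hsnd : ∀ t ∈ Ici (0 : ℝ), 0 ≤ (γ t).2)
    (hle : ∀ t ∈ Ici (0 : ℝ), 0 < (γ t).2 → (γ t).1 ≤ b) : IsConnectingOrbit f l a b γ := by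
  subst hfst
  have hpos := h.snd_pos_of_snd_nonneg hf hl hf0 (hfpos _ (left_mem_Ico.2 hab)) hsnd
  exact ⟨h, rfl, hpos, h.tendsto_fst hl hf.continuous.continuousOn hfpos hsnd
    fun t ht ↦ hle t ht (hpos t ht)⟩

lemma continuous_orbit {P : Type*} [TopologicalSpace P] (hf : LipschitzWith K f) {M : ℝ}
    (hM : ∀ u, |f u| ≤ M) {lam : P → ℝ} (hlam : Continuous lam) {γ : P → ℝ → ℝ × ℝ}
    (hγ : ∀ p, IsOrbit f (lam p) (γ p)) (h₀ : Continuous fun p ↦ γ p 0) {t : ℝ} (ht : 0 ≤ t) :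
    Continuous fun p ↦ γ p t :=
  continuous_iff_continuousAt.2 fun p₀ ↦
    continuousAt_isIntegralCurveOn_Ici (X := fun p ↦ planarField f (lam p))
      (lipschitzWith_planarField hf (lam p₀))
      (fun U hU ↦ (hlam.tendsto p₀).eventually (tendstoUniformly_planarField hM (lam p₀) U hU))
      hγ h₀.continuousAt ht

theorem exists_isConnectingOrbit_of_lipschitzWith {P : Type*} [TopologicalSpace P]
    [PreconnectedSpace P] (hf : LipschitzWith K f) {M : ℝ} (hM : ∀ u, f u ≤ M) (hf0 : ∀ u, 0 ≤ f u)
    (hfpos : ∀ u ∈ Ico a b, 0 < f u) (hfb : ∀ u, b ≤ u → f u = 0) (hab : a < b) {lam y : P → ℝ}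
    (hlam : Continuous lam) (hy : Continuous y) (hlam0 : ∀ p, 0 ≤ lam p)
    (hfree : ∀ p, lam p = 0 → 0 < y p) (hneg : ∃ p, y p < 0) (hzero : ∃ p, lam p = 0) :
    ∃ p, 0 < lam p ∧ ∃ γ, IsConnectingOrbit f (lam p) a b γ ∧ (γ 0).2 = y p := by
  choose γ hγ0 hγ using fun p ↦
    exists_isIntegralCurveOn_Ici_of_lipschitzWith (lipschitzWith_planarField hf (lam p)) (a, y p)
  have hγ : ∀ p, IsOrbit f (lam p) (γ p) := hγ
  have hcont : ∀ t ∈ Ici (0 : ℝ), Continuous fun p ↦ γ p t := fun t ht ↦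
    continuous_orbit hf (fun u ↦ (abs_of_nonneg (hf0 u)).trans_le (hM u)) hlam hγ
      (by simp_rw [hγ0]; fun_prop) ht
  let turning : Set P := ⋃ t ∈ Ici (0 : ℝ), {p | (γ p t).2 < 0}
  let overshooting : Set P := ⋃ t ∈ Ici (0 : ℝ), {p | b < (γ p t).1 ∧ 0 < (γ p t).2}
  have hturning : IsOpen turning := isOpen_biUnion fun t ht ↦
    isOpen_lt (hcont t ht).snd continuous_const
  have hovershooting : IsOpen overshooting := isOpen_biUnion fun t ht ↦
    (isOpen_lt continuous_const (hcont t ht).fst).inter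
      (isOpen_lt continuous_const (hcont t ht).snd)
  have hfree' : ∀ p, lam p = 0 → p ∈ overshooting := fun p hp ↦ by
    obtain ⟨t, ht, hpt⟩ :=
      (hp ▸ hγ p : IsOrbit f 0 (γ p)).exists_lt_fst_of_zero (by simpa [hγ0] using hfree p hp) b
    exact mem_biUnion ht hpt
  have hdisjoint : ∀ p ∈ turning, p ∉ overshooting := by
    intro p hp hp'
    obtain ⟨t, ht, hpt⟩ := mem_iUnion₂.1 hp
    obtain ⟨s, hs, hps⟩ := mem_iUnion₂.1 hp'
    exact ((hγ p).snd_pos_of_le_fst (hlam0 p) hf0 hfb hs hps.1.le hps.2 t ht).not_gt hpt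
  obtain ⟨p, hp⟩ : ∃ p, p ∉ turning ∪ overshooting := by
    by_contra! hcover
    obtain ⟨p, hp⟩ := hneg
    obtain ⟨p', hp'⟩ := hzero
    obtain ⟨x, hx, hx'⟩ := nonempty_inter hturning hovershooting (eq_univ_of_forall hcover)
      ⟨p, mem_biUnion (x := (0 : ℝ)) self_mem_Ici (by simpa [hγ0] using hp)⟩ ⟨p', hfree' p' hp'⟩
    exact hdisjoint x hx hx'
  obtain ⟨hturn, hover⟩ := not_or.1 hp
  have hl : 0 < lam p := (hlam0 p).lt_of_ne' fun hl ↦ hover (hfree' p hl)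
  exact ⟨p, hl, γ p, (hγ p).isConnectingOrbit hf hl hf0 hfpos hab (by rw [hγ0])
    (fun t ht ↦ not_lt.1 fun hpt ↦ hturn (mem_biUnion ht hpt))
    fun t ht hpt ↦ not_lt.1 fun hbt ↦ hover (mem_biUnion ht ⟨hbt, hpt⟩), by rw [hγ0]⟩

theorem exists_isConnectingOrbit {P : Type*} [TopologicalSpace P] [PreconnectedSpace P]
    {F : ℝ → ℝ} (hF : LipschitzOnWith K F (Icc a b)) (hFpos : ∀ u ∈ Ico a b, 0 < F u)
    (hFb : F b = 0) (hab : a < b) {lam y : P → ℝ} (hlam : Continuous lam) (hy : Continuous y)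
    (hlam0 : ∀ p, 0 ≤ lam p) (hfree : ∀ p, lam p = 0 → 0 < y p) (hneg : ∃ p, y p < 0)
    (hzero : ∃ p, lam p = 0) :
    ∃ p, 0 < lam p ∧ ∃ γ, IsConnectingOrbit F (lam p) a b γ ∧ (γ 0).2 = y p := by
  let f : ℝ → ℝ := IccExtend hab.le ((Icc a b).domRestrict F)
  have hfF : EqOn f F (Icc a b) := fun u hu ↦ IccExtend_of_mem _ _ hu
  have hforall {p : ℝ → Prop} (hp : ∀ u ∈ Icc a b, p (F u)) (u : ℝ) : p (f u) :=
    hp _ (projIcc a b hab.le u).2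
  have hf : LipschitzWith (K * 1) f := hF.to_restrict.comp (LipschitzWith.projIcc hab.le)
  have hF0 : ∀ u ∈ Icc a b, 0 ≤ F u := fun u hu ↦ hu.2.lt_or_eq.elim
    (fun h ↦ (hFpos u ⟨hu.1, h⟩).le) fun h ↦ (h ▸ hFb).ge
  have hfpos : ∀ u ∈ Ico a b, 0 < f u := fun u hu ↦
    (hFpos u hu).trans_eq (hfF (Ico_subset_Icc_self hu)).symm
  have hfb : ∀ u, b ≤ u → f u = 0 := fun u hu ↦
    (IccExtend_of_right_le hab.le _ hu).trans hFb
  obtain ⟨M, hM⟩ := isCompact_Icc.exists_bound_of_continuousOn hF.continuousOn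
  obtain ⟨p, hl, γ, hγ, hγ0⟩ := exists_isConnectingOrbit_of_lipschitzWith hf
    (hforall (p := (· ≤ M)) fun u hu ↦ (le_abs_self _).trans (hM u hu)) (hforall (p := (0 ≤ ·)) hF0)
    hfpos hfb hab hlam hy hlam0 hfree hneg hzero
  exact ⟨p, hl, γ, hγ.congr hfF, hγ0⟩

end ConnectingOrbits

section HalfLine

lemma contDiffOn_two_of_hasDerivWithinAt {s : Set ℝ} (hs : UniqueDiffOn ℝ s) {θ θ' θ'' : ℝ → ℝ}
    (hθ : ∀ x ∈ s, HasDerivWithinAt θ (θ' x) s x)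
    (hθ' : ∀ x ∈ s, HasDerivWithinAt θ' (θ'' x) s x) (hθ'' : ContinuousOn θ'' s) :
    ContDiffOn ℝ 2 θ s := by
  rw [show (2 : WithTop ℕ∞) = 1 + 1 from rfl, contDiffOn_succ_iff_derivWithin hs]
  refine ⟨fun x hx ↦ (hθ x hx).differentiableWithinAt, by simp, ?_⟩
  refine ContDiffOn.congr ?_ fun x hx ↦ (hθ x hx).derivWithin (hs x hx)
  rw [contDiffOn_one_iff_derivWithin hs]
  exact ⟨fun x hx ↦ (hθ' x hx).differentiableWithinAt,
    hθ''.congr fun x hx ↦ (hθ' x hx).derivWithin (hs x hx)⟩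

/-- A solution `θ` of `θ'' - c θ' + F(θ) = 0` on `[R, ∞)` leaving the point `a` with velocity `y`
and increasing to `b`: it parametrises the stable separatrix of the equilibrium `(b, 0)`.
Derivatives are taken within `[R, ∞)`. -/
def IsStableSeparatrix (F : ℝ → ℝ) (c R a y b : ℝ) (θ : ℝ → ℝ) : Prop :=
  ContDiffOn ℝ 2 θ (Ici R) ∧
    (∀ x ∈ Ici R, derivWithin (derivWithin θ (Ici R)) (Ici R) x
        - c * derivWithin θ (Ici R) x + F (θ x) = 0) ∧
    θ R = a ∧
    derivWithin θ (Ici R) R = y ∧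
    (∀ x ∈ Ici R, 0 < derivWithin θ (Ici R) x) ∧
    Tendsto θ atTop (𝓝 b)

variable {F : ℝ → ℝ} {c R a y b : ℝ}

lemma IsStableSeparatrix.exists_isConnectingOrbit {θ : ℝ → ℝ}
    (h : IsStableSeparatrix F c R a y b θ) (hc : 0 < c) :
    ∃ γ, IsConnectingOrbit F (c ^ 2)⁻¹ a b γ ∧ (γ 0).2 = y / c := by
  obtain ⟨hC, hode, h0, h0', hpos, hlim⟩ := h
  set θ' := derivWithin θ (Ici R)
  have hθ : ∀ x ∈ Ici R, HasDerivWithinAt θ (θ' x) (Ici R) x := fun x hx ↦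
    (hC.differentiableOn two_ne_zero x hx).hasDerivWithinAt
  have hθ' : ∀ x ∈ Ici R, HasDerivWithinAt θ' (c * θ' x - F (θ x)) (Ici R) x := fun x hx ↦
    ((hC.derivWithin (uniqueDiffOn_Ici R) (m := 1) one_add_one_eq_two.le).differentiableOn
      one_ne_zero x hx).hasDerivWithinAt.congr_deriv (by linear_combination hode x hx)
  let φ : ℝ → ℝ := fun t ↦ R + t / c
  have hφ : MapsTo φ (Ici 0) (Ici R) := fun t ht ↦
    le_add_of_nonneg_right (div_nonneg ht hc.le)
  have hφ' : ∀ t, HasDerivWithinAt φ (1 / c) (Ici 0) t := fun t ↦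
    ((hasDerivWithinAt_id t _).div_const c).const_add R
  have hφlim : Tendsto φ atTop atTop :=
    tendsto_atTop_add_const_left _ _ (tendsto_id.atTop_div_const hc)
  refine ⟨fun t ↦ (θ (φ t), θ' (φ t) / c), ⟨fun t ht ↦ ?_, by simp [φ, h0],
    fun t ht ↦ div_pos (hpos _ (hφ ht)) hc, hlim.comp hφlim⟩, by simp [φ, h0']⟩
  refine (((hθ _ (hφ ht)).comp t (hφ' t) hφ).prodMk
    (((hθ' _ (hφ ht)).comp t (hφ' t) hφ).div_const c)).congr_deriv (Prod.ext ?_ ?_)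
  · exact mul_one_div _ _
  · simp only [planarField]
    field_simp

lemma IsConnectingOrbit.exists_isStableSeparatrix {γ : ℝ → ℝ × ℝ}
    (h : IsConnectingOrbit F (c ^ 2)⁻¹ a b γ) (hF : ContinuousOn F (Icc a b)) (hc : 0 < c)
    (R : ℝ) : ∃ θ, IsStableSeparatrix F c R a (c * (γ 0).2) b θ := by
  let φ : ℝ → ℝ := fun x ↦ c * (x - R)
  have hφ : MapsTo φ (Ici R) (Ici 0) := fun x hx ↦ mul_nonneg hc.le (sub_nonneg.2 hx)
  have hφ' : ∀ x, HasDerivWithinAt φ c (Ici R) x := fun x ↦ by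
    simpa using ((hasDerivWithinAt_id x (Ici R)).sub_const R).const_mul c
  have hφlim : Tendsto φ atTop atTop :=
    (tendsto_atTop_add_const_right _ (-R) tendsto_id).const_mul_atTop hc
  let θ : ℝ → ℝ := fun x ↦ (γ (φ x)).1
  let θ' : ℝ → ℝ := fun x ↦ c * (γ (φ x)).2
  have hθ : ∀ x ∈ Ici R, HasDerivWithinAt θ (θ' x) (Ici R) x := fun x hx ↦
    ((h.isOrbit.hasDerivWithinAt_fst (hφ hx)).comp x (hφ' x) hφ).congr_deriv (mul_comm _ _)
  have hθ' : ∀ x ∈ Ici R, HasDerivWithinAt θ' (c * θ' x - F (θ x)) (Ici R) x := fun x hx ↦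
    (((h.isOrbit.hasDerivWithinAt_snd (hφ hx)).comp x (hφ' x) hφ).const_mul c).congr_deriv <| by
      simp only [θ', θ]
      field_simp
  have hθ'_eq : ∀ x ∈ Ici R, derivWithin θ (Ici R) x = θ' x := fun x hx ↦
    (hθ x hx).derivWithin (uniqueDiffOn_Ici R x hx)
  have hθc : ContinuousOn θ (Ici R) := fun x hx ↦ (hθ x hx).continuousWithinAt
  have hθ'c : ContinuousOn θ' (Ici R) := fun x hx ↦ (hθ' x hx).continuousWithinAt
  have hθ''c : ContinuousOn (fun x ↦ c * θ' x - F (θ x)) (Ici R) :=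
    (hθ'c.const_mul c).sub (hF.comp hθc fun x hx ↦ h.fst_mem_Icc (hφ hx))
  refine ⟨θ, contDiffOn_two_of_hasDerivWithinAt (uniqueDiffOn_Ici R) hθ hθ' hθ''c,
    fun x hx ↦ ?_, by simp [θ, φ, h.fst_zero], ?_, fun x hx ↦ ?_, h.tendsto_fst.comp hφlim⟩
  · rw [derivWithin_congr hθ'_eq (hθ'_eq x hx), hθ'_eq x hx,
      (hθ' x hx).derivWithin (uniqueDiffOn_Ici R x hx)]
    ring
  · simp [hθ'_eq R self_mem_Ici, θ', φ]
  · rw [hθ'_eq x hx]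
    exact mul_pos hc (h.snd_pos _ (hφ hx))

end HalfLine

section IgnitionCurve

open Real

lemma exp_sub_one_sub_pos {s : ℝ} (hs : s ≠ 0) : 0 < exp s - 1 - s := by
  linarith [add_one_lt_exp hs]

/-- The value of `c⁻²` on the curve `G = 0` as a function of `s = cR`, where `A` and `B` stand for
`θ_ig` and `θ_hl`. -/
noncomputable def ignitionCurve (q A B s : ℝ) : ℝ :=
  (A * exp s - B) / (q * (exp s - 1 - s))

variable {q A B s t : ℝ}

lemma G_eq_zero_iff {R c : ℝ} (hq : q ≠ 0) (hR : R ≠ 0) (hc : c ≠ 0) :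
    G q A B R c = 0 ↔ ignitionCurve q A B (c * R) = (c ^ 2)⁻¹ := by
  have hne : q * (exp (c * R) - 1 - c * R) ≠ 0 :=
    mul_ne_zero hq (exp_sub_one_sub_pos (mul_ne_zero hc hR)).ne'
  rw [ignitionCurve, inv_eq_one_div, div_eq_div_iff hne (pow_ne_zero 2 hc), G, sub_eq_zero,
    one_mul, mul_comm (c ^ 2), eq_comm]

lemma sub_ignitionCurve_mul (hq : q ≠ 0) (hs : s ≠ 0) :
    (B - q * s * ignitionCurve q A B s) * (exp s - 1 - s) =
      exp s * (B * (1 - exp (-s)) - A * s) := by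
  have hcurve : q * ignitionCurve q A B s * (exp s - 1 - s) = A * exp s - B := by
    have := (exp_sub_one_sub_pos hs).ne'
    rw [ignitionCurve]
    field_simp
  have hexp : exp s * exp (-s) = 1 := by rw [← exp_add, add_neg_cancel, exp_zero]
  linear_combination -s * hcurve + B * hexp

lemma mul_lt_mul_one_sub_exp_neg_iff (hq : q ≠ 0) (hs : s ≠ 0) :
    A * s < B * (1 - exp (-s)) ↔ q * s * ignitionCurve q A B s < B := by
  rw [← sub_pos, ← sub_pos (b := q * s * _), ← mul_pos_iff_of_pos_left (exp_pos s),
    ← sub_ignitionCurve_mul hq hs, mul_pos_iff_of_pos_right (exp_sub_one_sub_pos hs)]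

lemma mul_lt_mul_one_sub_exp_neg_of_le (hB : 0 ≤ B) (hs : 0 < s) (hst : s ≤ t)
    (ht : A * t < B * (1 - exp (-t))) : A * s < B * (1 - exp (-s)) := by
  have ht0 : 0 < t := hs.trans_le hst
  have hconvex : exp ((s / t) • -t + (1 - s / t) • 0) ≤
      (s / t) • exp (-t) + (1 - s / t) • exp 0 :=
    convexOn_exp.2 (mem_univ _) (mem_univ _) (by positivity)
      (sub_nonneg.2 ((div_le_one ht0).2 hst)) (add_sub_cancel _ _)
  have hst' : s / t * -t = -s := by field_simp
  simp only [smul_eq_mul, mul_zero, add_zero, exp_zero, mul_one, hst'] at hconvex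
  calc A * s = s / t * (A * t) := by field_simp
    _ < s / t * (B * (1 - exp (-t))) := mul_lt_mul_of_pos_left ht (div_pos hs ht0)
    _ = B * (s / t * (1 - exp (-t))) := by ring
    _ ≤ B * (1 - exp (-s)) := mul_le_mul_of_nonneg_left (by linarith) hB

lemma hasDerivAt_ignitionCurve (hq : q ≠ 0) (hs : s ≠ 0) :
    HasDerivAt (ignitionCurve q A B)
      (q * exp s * (B * (1 - exp (-s)) - A * s) / (q * (exp s - 1 - s)) ^ 2) s := by
  have hnum : HasDerivAt (fun s ↦ A * exp s - B) (A * exp s) s :=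
    ((hasDerivAt_exp s).const_mul A).sub_const B
  have hden : HasDerivAt (fun s ↦ q * (exp s - 1 - s)) (q * (exp s - 1)) s :=
    (((hasDerivAt_exp s).sub_const 1).sub (hasDerivAt_id s)).const_mul q
  refine (hnum.div hden (mul_ne_zero hq (exp_sub_one_sub_pos hs).ne')).congr_deriv ?_
  have hexp : exp s * exp (-s) = 1 := by rw [← exp_add, add_neg_cancel, exp_zero]
  congr 1
  linear_combination q * B * hexp

lemma ignitionCurve_lt_ignitionCurve (hq : 0 < q) (hB : 0 ≤ B) (hs : 0 < s) (hst : s < t)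
    (ht : q * t * ignitionCurve q A B t < B) :
    ignitionCurve q A B s < ignitionCurve q A B t := by
  have hpos : ∀ u ∈ Icc s t, 0 < u := fun u hu ↦ hs.trans_le hu.1
  have hderiv : ∀ u ∈ Icc s t, HasDerivAt (ignitionCurve q A B) _ u := fun u hu ↦
    hasDerivAt_ignitionCurve hq.ne' (hpos u hu).ne'
  have ht' := (mul_lt_mul_one_sub_exp_neg_iff hq.ne' (hs.trans hst).ne').2 ht
  refine strictMonoOn_of_hasDerivWithinAt_pos (convex_Icc s t)
    (fun u hu ↦ (hderiv u hu).continuousAt.continuousWithinAt)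
    (fun u hu ↦ (hderiv u (interior_subset hu)).hasDerivWithinAt)
    (fun u hu ↦ ?_) (left_mem_Icc.2 hst.le) (right_mem_Icc.2 hst.le) hst
  have hu' := interior_subset hu
  have hslope := sub_pos.2 (mul_lt_mul_one_sub_exp_neg_of_le hB (hpos u hu') hu'.2 ht')
  have hden := exp_sub_one_sub_pos (hpos u hu').ne'
  positivity

lemma ignitionCurve_log_div (q : ℝ) (hA : 0 < A) (hB : 0 < B) :
    ignitionCurve q A B (log (B / A)) = 0 := by
  rw [ignitionCurve, exp_log (div_pos hB hA), mul_div_cancel₀ _ hA.ne', sub_self, zero_div]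

lemma ignitionCurve_nonneg (hq : 0 ≤ q) (hA : 0 < A) (hB : 0 < B) (hs : log (B / A) ≤ s) :
    0 ≤ ignitionCurve q A B s := by
  have hexp : B ≤ exp s * A :=
    (div_le_iff₀ hA).1 ((log_le_iff_le_exp (div_pos hB hA)).1 hs)
  exact div_nonneg (by linarith) (mul_nonneg hq (by linarith [add_one_le_exp s]))

lemma lt_mul_ignitionCurve_div (hq : q ≠ 0) (hA : A ≠ 0) (hB : 0 < B) :
    B < q * (B / A) * ignitionCurve q A B (B / A) := by
  have hs : B / A ≠ 0 := div_ne_zero hB.ne' hA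
  refine sub_neg.1 (neg_of_mul_neg_left (b := exp (B / A) - 1 - B / A) ?_
    (exp_sub_one_sub_pos hs).le)
  rw [sub_ignitionCurve_mul hq hs, mul_div_cancel₀ _ hA]
  exact mul_neg_of_pos_of_neg (exp_pos _) (by linarith [mul_pos hB (exp_pos (-(B / A)))])

end IgnitionCurve

section ScaledProblem

variable {F : ℝ → ℝ} {q θig θhl θp s : ℝ}

/-- The problem in the variables `t = c (x - R)` and `s = cR`, with `c⁻²` eliminated by means of
the equation `G = 0`. -/
def IsScaledSolution (F : ℝ → ℝ) (q θig θhl θp s : ℝ) : Prop :=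
  0 < s ∧ 0 < ignitionCurve q θig θhl s ∧
    ∃ γ, IsConnectingOrbit F (ignitionCurve q θig θhl s) θhl θp γ ∧
      (γ 0).2 = θhl - q * s * ignitionCurve q θig θhl s

theorem exists_isScaledSolution (hq : 0 < q) (hF : LocallyLipschitzOn (Icc θhl θp) F)
    (hFpos : ∀ u ∈ Ico θhl θp, 0 < F u) (hFθp : F θp = 0) (h1 : 0 < θig) (h2 : θig < θhl)
    (h3 : θhl < θp) : ∃ s, IsScaledSolution F q θig θhl θp s := by
  have hθhl : 0 < θhl := h1.trans h2
  have hlog : 0 < Real.log (θhl / θig) := Real.log_pos ((one_lt_div h1).2 h2)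
  have hle : Real.log (θhl / θig) ≤ θhl / θig := Real.log_le_self (div_pos hθhl h1).le
  let P := Icc (Real.log (θhl / θig)) (θhl / θig)
  have : PreconnectedSpace P := Subtype.preconnectedSpace isPreconnected_Icc
  have hpos (s : P) : 0 < (s : ℝ) := hlog.trans_le s.2.1
  have hcurve : Continuous fun s : P ↦ ignitionCurve q θig θhl s :=
    continuous_iff_continuousAt.2 fun s ↦
      (hasDerivAt_ignitionCurve hq.ne' (hpos s).ne').continuousAt.comp
        (f := fun s : P ↦ (s : ℝ)) continuousAt_subtype_val
  obtain ⟨K, hK⟩ := hF.exists_lipschitzOnWith_of_compact isCompact_Icc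
  obtain ⟨s, hs, hγ⟩ := exists_isConnectingOrbit hK hFpos hFθp h3 hcurve
    (y := fun s : P ↦ θhl - q * s * ignitionCurve q θig θhl s) (by fun_prop)
    (fun s ↦ ignitionCurve_nonneg hq.le h1 hθhl s.2.1) (fun s hs ↦ by simpa [hs] using hθhl)
    ⟨⟨_, right_mem_Icc.2 hle⟩, sub_neg.2 (lt_mul_ignitionCurve_div hq.ne' h1.ne' hθhl)⟩
    ⟨⟨_, left_mem_Icc.2 hle⟩, ignitionCurve_log_div q h1 hθhl⟩
  exact ⟨s, hpos s, hs, hγ⟩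

lemma IsScaledSolution.le {s₁ s₂ : ℝ} (h₁ : IsScaledSolution F q θig θhl θp s₁)
    (h₂ : IsScaledSolution F q θig θhl θp s₂) (hq : 0 < q) (hF : AntitoneOn F (Icc θhl θp))
    (hFθp : 0 ≤ F θp) (hθhl : 0 ≤ θhl) : s₂ ≤ s₁ := by
  obtain ⟨hs₁, hl₁, γ₁, hγ₁, hγ₁0⟩ := h₁
  obtain ⟨-, -, γ₂, hγ₂, hγ₂0⟩ := h₂
  by_contra! hlt
  have hinterior : q * s₂ * ignitionCurve q θig θhl s₂ < θhl :=
    sub_pos.1 (hγ₂0 ▸ hγ₂.snd_pos 0 self_mem_Ici)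
  have hcurve := ignitionCurve_lt_ignitionCurve hq hθhl hs₁ hlt hinterior
  have hvelocity := hγ₁.snd_zero_le_snd_zero hF hFθp hl₁.le hcurve.le hγ₂
  rw [hγ₁0, hγ₂0, sub_le_sub_iff_left, mul_assoc, mul_assoc, mul_le_mul_iff_right₀ hq] at hvelocity
  exact hvelocity.not_gt (mul_lt_mul'' hlt hcurve hs₁.le hl₁.le)

theorem IsScaledSolution.eq {s₁ s₂ : ℝ} (h₁ : IsScaledSolution F q θig θhl θp s₁)
    (h₂ : IsScaledSolution F q θig θhl θp s₂) (hq : 0 < q) (hF : AntitoneOn F (Icc θhl θp))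
    (hFθp : 0 ≤ F θp) (hθhl : 0 ≤ θhl) : s₁ = s₂ :=
  le_antisymm (h₂.le h₁ hq hF hFθp hθhl) (h₁.le h₂ hq hF hFθp hθhl)

lemma exists_isStableSeparatrix_iff {R c : ℝ} (hq : q ≠ 0) (hR : 0 < R) (hc : 0 < c)
    (hF : ContinuousOn F (Icc θhl θp)) (hG : G q θig θhl R c = 0) :
    (∃ θ, IsStableSeparatrix F c R θhl (c * θhl - q * R) θp θ) ↔
      IsScaledSolution F q θig θhl θp (c * R) := by
  have hcurve := (G_eq_zero_iff hq hR.ne' hc.ne').1 hG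
  have hy : c * θhl - q * R = c * (θhl - q * (c * R) * (c ^ 2)⁻¹) := by field_simp
  rw [IsScaledSolution, hcurve, hy]
  refine ⟨fun ⟨θ, hθ⟩ ↦ ⟨mul_pos hc hR, by positivity, ?_⟩, fun ⟨_, _, γ, hγ, hγ0⟩ ↦ ?_⟩
  · simpa only [mul_div_cancel_left₀ _ hc.ne'] using hθ.exists_isConnectingOrbit hc
  · exact hγ0 ▸ hγ.exists_isStableSeparatrix hF hc R

theorem stmt19_general (hq : 0 < q) (hF : LocallyLipschitzOn (Icc θhl θp) F)
    (hFanti : AntitoneOn F (Icc θhl θp)) (hFpos : ∀ u ∈ Ico θhl θp, 0 < F u) (hFθp : F θp = 0)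
    (h1 : 0 < θig) (h2 : θig < θhl) (h3 : θhl < θp) :
    ∃! p : ℝ × ℝ, 0 < p.1 ∧ 0 < p.2 ∧ q * p.1 < p.2 * θhl ∧ G q θig θhl p.1 p.2 = 0 ∧
      ∃ θ, IsStableSeparatrix F p.2 p.1 θhl (p.2 * θhl - q * p.1) θp θ := by
  have hFc := hF.continuousOn
  obtain ⟨s, hs⟩ := exists_isScaledSolution hq hF hFpos hFθp h1 h2 h3
  obtain ⟨hs0, hl, -⟩ := id hs
  set c := (√(ignitionCurve q θig θhl s))⁻¹ with hc_def
  have hc : 0 < c := inv_pos.2 (Real.sqrt_pos.2 hl)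
  have hcurve : ignitionCurve q θig θhl s = (c ^ 2)⁻¹ := by
    rw [hc_def, inv_pow, inv_inv, Real.sq_sqrt hl.le]
  have hcR : c * (s / c) = s := mul_div_cancel₀ s hc.ne'
  have hR : 0 < s / c := div_pos hs0 hc
  have hG : G q θig θhl (s / c) c = 0 := (G_eq_zero_iff hq.ne' hR.ne' hc.ne').2 (by rwa [hcR])
  obtain ⟨θ, hθ⟩ := (exists_isStableSeparatrix_iff hq.ne' hR hc hFc hG).2 (hcR.symm ▸ hs)
  have hinterior : 0 < c * θhl - q * (s / c) := by
    obtain ⟨-, -, -, hy, hpos, -⟩ := hθ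
    exact hy ▸ hpos _ self_mem_Ici
  refine ⟨(s / c, c), ⟨hR, hc, sub_pos.1 hinterior, hG, θ, hθ⟩, ?_⟩
  rintro ⟨R', c'⟩ ⟨hR' : 0 < R', hc' : 0 < c', -, hG', hθ'⟩
  have hs' : c' * R' = s :=
    ((exists_isStableSeparatrix_iff hq.ne' hR' hc' hFc hG').1 hθ').eq hs hq hFanti hFθp.ge
      (h1.trans h2).le
  have hcurve' := (G_eq_zero_iff hq.ne' hR'.ne' hc'.ne').1 hG'
  rw [hs', hcurve, inv_inj, pow_left_inj₀ hc.le hc'.le two_ne_zero] at hcurve'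
  subst hcurve'
  rw [← hs', mul_div_cancel_left₀ _ hc.ne']

end ScaledProblem

section HeatBalance

/-- The reaction term `F(u) = q − h((1 + u)⁴ − 1)` of the theorem. -/
def heatBalance (q h u : ℝ) : ℝ := q - h * ((1 + u) ^ 4 - 1)

variable {q h : ℝ}

lemma strictAntiOn_heatBalance (q : ℝ) (hh : 0 < h) : StrictAntiOn (heatBalance q h) (Ici (-1)) :=
  fun u hu v _ huv ↦ by
    have hpow : (1 + u) ^ 4 < (1 + v) ^ 4 :=
      pow_lt_pow_left₀ (by linarith) (neg_le_iff_add_nonneg'.1 hu) (by norm_num)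
    simp only [heatBalance]
    gcongr

lemma heatBalance_equilibrium (hq : 0 ≤ q) (hh : 0 < h) :
    heatBalance q h ((1 + q / h) ^ ((1 : ℝ) / 4) - 1) = 0 := by
  have hroot : ((1 + q / h) ^ ((1 : ℝ) / 4)) ^ 4 = 1 + q / h := by
    rw [one_div]
    exact_mod_cast Real.rpow_inv_natCast_pow (n := 4) (by positivity) (by norm_num)
  rw [heatBalance, add_sub_cancel, hroot]
  field_simp
  ring

lemma contDiff_heatBalance (q h : ℝ) : ContDiff ℝ 1 (heatBalance q h) := by
  unfold heatBalance
  fun_prop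

end HeatBalance

/-- Existence and uniqueness of the pair `(R*, c*)` in the interior of `Q₊`
satisfying both the transcendental equation `G(R*, c*) = 0` and the
stable-separatrix condition: the solution of `θ'' − c*θ' + F(θ) = 0` on
`[R*, ∞)` with `θ(R*) = θ_hl`, `θ'(R*) = c*θ_hl − qR*` is increasing and tends
to `θ₊`, where `F(u) = q − h((1 + u)⁴ − 1)`.
(Derivatives on `[R*, ∞)` are taken within `[R*, ∞)`.) -/
theorem stmt19 (q h θig θhl θp : ℝ) (hq : 0 < q) (hh : 0 < h)
    (hθp : θp = (1 + q / h) ^ ((1 : ℝ) / 4) - 1)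
    (h1 : 0 < θig) (h2 : θig < θhl) (h3 : θhl < θp) :
    ∃! p : ℝ × ℝ,
      0 < p.1 ∧ 0 < p.2 ∧ q * p.1 < p.2 * θhl ∧
      G q θig θhl p.1 p.2 = 0 ∧
      ∃ θ : ℝ → ℝ,
        ContDiffOn ℝ 2 θ (Ici p.1) ∧
        (∀ x ∈ Ici p.1, derivWithin (derivWithin θ (Ici p.1)) (Ici p.1) x
            - p.2 * derivWithin θ (Ici p.1) x
            + (q - h * ((1 + θ x) ^ 4 - 1)) = 0) ∧
        θ p.1 = θhl ∧
        derivWithin θ (Ici p.1) p.1 = p.2 * θhl - q * p.1 ∧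
        (∀ x ∈ Ici p.1, 0 < derivWithin θ (Ici p.1) x) ∧
        Tendsto θ atTop (nhds θp) := by
  have hequilibrium : heatBalance q h θp = 0 := hθp ▸ heatBalance_equilibrium hq.le hh
  have hanti : StrictAntiOn (heatBalance q h) (Icc θhl θp) :=
    (strictAntiOn_heatBalance q hh).mono fun u hu ↦ mem_Ici.2 (by linarith [hu.1])
  have hpos : ∀ u ∈ Ico θhl θp, 0 < heatBalance q h u := fun u hu ↦
    hequilibrium ▸ hanti (Ico_subset_Icc_self hu) (right_mem_Icc.2 h3.le) hu.2
  exact stmt19_general hq (contDiff_heatBalance q h).locallyLipschitz.locallyLipschitzOn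
    hanti.antitoneOn hpos hequilibrium h1 h2 h3
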